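/- For every integer d ≥ 2 and every subset A ⊆ F_q, one has Σ_{x ∈ F_q^d, x ≠ (0,…,0)} g(x)² ≤ (Σ_{i=0}^{d−1} |A|^i) · Σ_{l ∈ F_q, l ≠ 0} N_{d−1}(A;l)². -/

import Mathlib

/-!
The left-hand side counts the pairs `(M, M')` of `A`-valued `e × (e + 1)` matrices with
`vmat M = vmat M' ≠ 0`. Fix the index `i` of the first nonzero coordinate of `x = vmat M` and delete
column `i` from both matrices. The two square matrices left over have equal nonzero determinants, so
there are at most `∑_{l ≠ 0} N_e(A; l)²` such pairs.

By Laplace expansion `M x = M' x = 0`. As `x i ≠ 0`, this makes column `i` of `M'` a function of `x`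
and the other columns of `M'`, so only column `i` of `M` is still free. As `x j = 0` for `j < i`,
that column lies in the span of the `e - i` later columns of `M`, which are linearly independent
because `x i ≠ 0`. Some `e - i` coordinates separate the points of this span, hence it contains at
most `|A| ^ (e - i)` vectors with entries in `A`. Summing over `i` gives the factor
`∑_{j ≤ e} |A| ^ j`.
-/

/-- `matCount F d A t` is the number of `d × d` matrices over `F` all of whose entries
lie in `A` and whose determinant equals `t`. -/
noncomputable def matCount (F : Type) [CommRing F] [Fintype F] (d : ℕ) (A : Finset F) (t : F) : ℕ :=
  Nat.card {M : Matrix (Fin d) (Fin d) F // (∀ i j, M i j ∈ A) ∧ M.det = t}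

/-- For a `(d-1) × d` matrix `M` (here `d = e + 1`), `vmat M` is the vector whose `i`-th
coordinate is `(-1)^(i+1)` times the determinant of the minor of `M` obtained by deleting
the `i`-th column (indices `0`-based, corresponding to `(-1)^i det M_i` with `1`-based `i`). -/
def vmat {F : Type} [CommRing F] {e : ℕ} (M : Matrix (Fin e) (Fin (e + 1)) F) :
    Fin (e + 1) → F :=
  fun i => (-1 : F) ^ ((i : ℕ) + 1) * (M.submatrix id i.succAbove).det

/-- `gcount F e A x` is the number of `(d-1) × d` matrices `M` (with `d = e + 1`) over `F`
with all entries in `A` such that `vmat M = x`. -/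
noncomputable def gcount (F : Type) [CommRing F] [Fintype F] (e : ℕ) (A : Finset F)
    (x : Fin (e + 1) → F) : ℕ :=
  Nat.card {M : Matrix (Fin e) (Fin (e + 1)) F // (∀ i j, M i j ∈ A) ∧ vmat M = x}

open Finset Module

lemma finsum_card_fiber_sq {α β : Type*} [DecidableEq β] (s : Finset α) (f : α → β) (p : β → Prop)
    [DecidablePred p] :
    ∑ᶠ (b : β) (_ : p b), Nat.card {a // a ∈ s ∧ f a = b} ^ 2 =
      #{q ∈ s ×ˢ s | f q.1 = f q.2 ∧ p (f q.1)} := by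
  have card_fiber (b : β) : Nat.card {a // a ∈ s ∧ f a = b} = #{a ∈ s | f a = b} :=
    Nat.subtype_card _ fun a => mem_filter
  simp only [card_fiber]
  have mem_support {b : β} (hb : #{a ∈ s | f a = b} ^ 2 ≠ 0) :
      p b ↔ b ∈ {b ∈ s.image f | p b} := by
    obtain ⟨a, ha⟩ := card_ne_zero.mp (pow_ne_zero_iff two_ne_zero |>.mp hb)
    obtain ⟨has, rfl⟩ := mem_filter.mp ha
    simp only [mem_filter, mem_image_of_mem f has, true_and]
  rw [finsum_cond_eq_sum_of_cond_iff _ mem_support,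
    card_eq_sum_card_fiberwise (f := fun q => f q.1) (t := {b ∈ s.image f | p b})]
  · refine sum_congr rfl fun b hb => ?_
    rw [sq, ← card_product]
    congr 1
    ext ⟨a, a'⟩
    have hpb : p b := (mem_filter.mp hb).2
    simp only [mem_filter, mem_product]
    grind
  · rintro ⟨a, a'⟩ ha
    simp only [coe_filter, mem_product, Set.mem_ofPred_eq, mem_image] at ha ⊢
    exact ⟨⟨a, ha.1.1, rfl⟩, ha.2.2⟩

/-- The finite set of `m × n` matrices all of whose entries lie in `A`; the ambient type `R` of
entries may be infinite. -/
def matricesIn {R : Type*} (m n : Type*) [Fintype m] [DecidableEq m] [Fintype n] [DecidableEq n]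
    (A : Finset R) : Finset (Matrix m n R) :=
  Fintype.piFinset fun _ => Fintype.piFinset fun _ => A

lemma mem_matricesIn {R m n : Type*} [Fintype m] [DecidableEq m] [Fintype n] [DecidableEq n]
    {A : Finset R} {M : Matrix m n R} : M ∈ matricesIn m n A ↔ ∀ i j, M i j ∈ A :=
  Fintype.mem_piFinset.trans (forall_congr' fun _ => Fintype.mem_piFinset)

section Coordinates

variable {F ι : Type*} [Field F]

lemma exists_finset_card_eq_finrank_injOn_restrict (W : Submodule F (ι → F)) [Module.Finite F W] :
    ∃ S : Finset ι, #S = finrank F W ∧ Set.InjOn S.restrict (W : Set (ι → F)) := by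
  classical
  let coord (i : ι) : Dual F W := LinearMap.proj i ∘ₗ W.subtype
  obtain ⟨κ, a, -, hspan, hli⟩ := exists_linearIndependent' F coord
  have : Finite κ := hli.finite
  have : Fintype κ := Fintype.ofFinite κ
  let restrictW : W →ₗ[F] univ.image a → F := LinearMap.pi fun i => coord i
  have hinj : Function.Injective restrictW := by
    intro w w' hww'
    have eval_eqOn : Set.EqOn (Dual.eval F W w) (Dual.eval F W w')
        (Submodule.span F (Set.range (coord ∘ a))) := by
      refine LinearMap.eqOn_span' ?_
      rintro _ ⟨k, rfl⟩
      exact congrFun hww' ⟨a k, mem_image_of_mem a (mem_univ k)⟩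
    rw [hspan] at eval_eqOn
    ext i
    exact eval_eqOn (Submodule.subset_span (Set.mem_range_self i))
  refine ⟨univ.image a, le_antisymm ?_ ?_, fun w hw w' hw' h =>
    congrArg Subtype.val (@hinj ⟨w, hw⟩ ⟨w', hw'⟩ h)⟩
  · calc #(univ.image a) ≤ Fintype.card κ := card_image_le
      _ ≤ finrank F (Dual F W) := hli.fintype_card_le_finrank
      _ = finrank F W := Subspace.dual_finrank_eq
  · simpa using LinearMap.finrank_le_finrank_of_injective hinj

lemma card_le_card_pow_finrank {W : Submodule F (ι → F)} [Module.Finite F W] {A : Finset F}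
    {s : Finset (ι → F)} (hW : ∀ w ∈ s, w ∈ W) (hA : ∀ w ∈ s, ∀ i, w i ∈ A) :
    #s ≤ #A ^ finrank F W := by
  obtain ⟨S, hS, hinj⟩ := exists_finset_card_eq_finrank_injOn_restrict W
  classical
  calc #s ≤ #(Fintype.piFinset fun _ : S => A) :=
        card_le_card_of_injOn S.restrict
          (fun w hw => Fintype.mem_piFinset.mpr fun i => hA w hw i) (hinj.mono hW)
    _ = #A ^ finrank F W := by
        rw [Fintype.card_piFinset, prod_const, card_univ, Fintype.card_coe, hS]

end Coordinates

lemma eq_of_submatrix_succAbove_eq_of_col_eq {R m : Type*} {n : ℕ} {M N : Matrix m (Fin (n + 1)) R}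
    {i : Fin (n + 1)} (hminor : M.submatrix id i.succAbove = N.submatrix id i.succAbove)
    (hcol : M.col i = N.col i) : M = N := by
  ext r j
  obtain rfl | ⟨j, rfl⟩ := i.eq_self_or_eq_succAbove j
  · exact congrFun hcol r
  · exact congrFun₂ hminor r j

section MaximalMinors

variable {R : Type} [CommRing R] {e : ℕ} {M N : Matrix (Fin e) (Fin (e + 1)) R} {i : Fin (e + 1)}

lemma vmat_apply_eq_iff :
    vmat M i = vmat N i ↔
      (M.submatrix id i.succAbove).det = (N.submatrix id i.succAbove).det :=
  (isUnit_neg_one.pow _).mul_right_inj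

lemma vmat_apply_ne_zero_iff : vmat M i ≠ 0 ↔ (M.submatrix id i.succAbove).det ≠ 0 :=
  (isUnit_neg_one.pow _).mul_right_eq_zero.not

lemma mulVec_vmat (M : Matrix (Fin e) (Fin (e + 1)) R) : M.mulVec (vmat M) = 0 := by
  funext r
  let repeated : Matrix (Fin (e + 1)) (Fin (e + 1)) R := Matrix.of (Fin.cons (M r) M)
  have det_repeated : repeated.det = 0 :=
    Matrix.det_zero_of_row_eq (Fin.succ_ne_zero r).symm rfl
  calc M.mulVec (vmat M) r
      = ∑ j : Fin (e + 1), M r j * ((-1) ^ ((j : ℕ) + 1) * (M.submatrix id j.succAbove).det) := rfl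
    _ = -∑ j : Fin (e + 1), (-1) ^ (j : ℕ) * M r j * (M.submatrix id j.succAbove).det := by
        rw [← sum_neg_distrib]
        exact sum_congr rfl fun j _ => by ring
    _ = -repeated.det := by rw [Matrix.det_succ_row_zero]; rfl
    _ = 0 := by rw [det_repeated, neg_zero]

lemma vmat_smul_col_add_sum (M : Matrix (Fin e) (Fin (e + 1)) R) (i : Fin (e + 1)) :
    vmat M i • M.col i + ∑ j, vmat M (i.succAbove j) • M.col (i.succAbove j) = 0 := by
  rw [← Fin.sum_univ_succAbove (fun j => vmat M j • M.col j), ← mulVec_vmat M]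
  ext r
  simp [Matrix.mulVec, dotProduct, mul_comm]

lemma eq_of_vmat_eq_of_submatrix_succAbove_eq [IsDomain R] (hv : vmat M = vmat N)
    (hi : vmat M i ≠ 0) (hminor : M.submatrix id i.succAbove = N.submatrix id i.succAbove) :
    M = N := by
  refine eq_of_submatrix_succAbove_eq_of_col_eq hminor ?_
  have hcol (j : Fin e) : M.col (i.succAbove j) = N.col (i.succAbove j) :=
    congrArg (Matrix.col · j) hminor
  have hM := vmat_smul_col_add_sum M i
  rw [hv] at hM hi
  simp only [hcol] at hM
  exact smul_right_injective _ hi (add_right_cancel (hM.trans (vmat_smul_col_add_sum N i).symm))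

end MaximalMinors

section LeadingIndex

variable {F : Type} [Field F] {e : ℕ} {M : Matrix (Fin e) (Fin (e + 1)) F} {i : Fin (e + 1)}

lemma linearIndepOn_col_compl_singleton_of_vmat_ne_zero (hi : vmat M i ≠ 0) :
    LinearIndepOn F M.col {i}ᶜ := by
  rw [← Fin.range_succAbove, linearIndepOn_range_iff Fin.succAbove_right_injective]
  have hunit : IsUnit (M.submatrix id i.succAbove) :=
    (Matrix.isUnit_iff_isUnit_det _).mpr (vmat_apply_ne_zero_iff.mp hi).isUnit
  exact Matrix.linearIndependent_cols_iff_isUnit.mpr hunit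

lemma finrank_span_col_image_Ioi (hi : vmat M i ≠ 0) :
    finrank F (Submodule.span F (M.col '' Set.Ioi i)) = e - i := by
  have hli : LinearIndepOn F M.col (Set.Ioi i) :=
    (linearIndepOn_col_compl_singleton_of_vmat_ne_zero hi).mono fun j hj => ne_of_gt hj
  rw [Set.image_eq_range, finrank_span_eq_card hli]
  simp

lemma col_mem_span_col_image_Ioi (hi : IsLeast (Function.support (vmat M)) i) :
    M.col i ∈ Submodule.span F (M.col '' Set.Ioi i) := by
  rw [← Submodule.smul_mem_iff _ hi.1,
    eq_neg_of_add_eq_zero_left (vmat_smul_col_add_sum M i)]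
  refine Submodule.neg_mem _ (Submodule.sum_mem _ fun j _ => ?_)
  by_cases hj : vmat M (i.succAbove j) = 0
  · rw [hj, zero_smul]
    exact Submodule.zero_mem _
  · have hlt : i < i.succAbove j := (hi.2 hj).lt_of_ne (Fin.succAbove_ne i j).symm
    exact Submodule.smul_mem _ _ (Submodule.subset_span (Set.mem_image_of_mem _ hlt))

lemma card_le_card_pow_of_submatrix_succAbove_eq {A : Finset F} {P : Matrix (Fin e) (Fin e) F}
    {S : Finset (Matrix (Fin e) (Fin (e + 1)) F)} (hA : S ⊆ matricesIn _ _ A)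
    (hi : ∀ M ∈ S, IsLeast (Function.support (vmat M)) i)
    (hP : ∀ M ∈ S, M.submatrix id i.succAbove = P) : #S ≤ #A ^ (e - i : ℕ) := by
  classical
  obtain rfl | ⟨N, hN⟩ := S.eq_empty_or_nonempty
  · simp
  have hcol : Set.InjOn (Matrix.col · i) (S : Set (Matrix (Fin e) (Fin (e + 1)) F)) :=
    fun M hM M' hM' => eq_of_submatrix_succAbove_eq_of_col_eq ((hP M hM).trans (hP M' hM').symm)
  have col_image_eq {M} (hM : M ∈ S) : M.col '' Set.Ioi i = N.col '' Set.Ioi i := by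
    refine Set.image_congr fun j hj => ?_
    obtain ⟨j, rfl⟩ := Fin.exists_succAbove_eq (ne_of_gt hj)
    exact congrArg (Matrix.col · j) ((hP M hM).trans (hP N hN).symm)
  rw [← card_image_of_injOn hcol, ← finrank_span_col_image_Ioi (hi N hN).1]
  refine card_le_card_pow_finrank (forall_mem_image.mpr fun M hM => ?_)
    (forall_mem_image.mpr fun M hM r => mem_matricesIn.mp (hA hM) r i)
  rw [← col_image_eq hM]
  exact col_mem_span_col_image_Ioi (hi M hM)

open scoped Classical in
lemma card_pairs_isLeast_support_vmat_le (A : Finset F) (i : Fin (e + 1)) :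
    #{p ∈ matricesIn (Fin e) (Fin (e + 1)) A ×ˢ matricesIn (Fin e) (Fin (e + 1)) A |
        vmat p.1 = vmat p.2 ∧ IsLeast (Function.support (vmat p.1)) i} ≤
      #A ^ (e - i : ℕ) * #{p ∈ matricesIn (Fin e) (Fin e) A ×ˢ matricesIn (Fin e) (Fin e) A |
        p.1.det = p.2.det ∧ p.1.det ≠ 0} := by
  refine card_le_mul_card_image_of_maps_to
    (f := fun p => (p.1.submatrix id i.succAbove, p.2.submatrix id i.succAbove)) ?_ _ ?_
  · rintro ⟨M, M'⟩ h
    simp only [mem_filter, mem_product, mem_matricesIn] at h ⊢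
    obtain ⟨⟨hM, hM'⟩, hv, hi⟩ := h
    exact ⟨⟨fun r j => hM _ _, fun r j => hM' _ _⟩, vmat_apply_eq_iff.mp (congrFun hv i),
      vmat_apply_ne_zero_iff.mp hi.1⟩
  · rintro ⟨P, P'⟩ -
    rw [← card_image_of_injOn (f := Prod.fst)]
    · apply card_le_card_pow_of_submatrix_succAbove_eq (i := i) (P := P)
      all_goals simp +contextual [subset_iff]
    · rintro ⟨M, M'⟩ h ⟨N, N'⟩ h' (rfl : M = N)
      simp only [coe_filter, mem_filter, Set.mem_ofPred_eq, Prod.mk.injEq] at h h'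
      obtain ⟨⟨-, hM, hi⟩, -, hMP⟩ := h
      obtain ⟨⟨-, hN, -⟩, -, hNP⟩ := h'
      rw [eq_of_vmat_eq_of_submatrix_succAbove_eq (hM.symm.trans hN) (hM ▸ hi.1)
        (hMP.trans hNP.symm)]

end LeadingIndex

-- As `A` is finite, both `finsum`s have finite support and so are honest sums.
theorem stmt_6_general {F : Type} [Field F] (e : ℕ) (A : Finset F) :
    ∑ᶠ (x : Fin (e + 1) → F) (_ : x ≠ 0),
        Nat.card {M : Matrix (Fin e) (Fin (e + 1)) F // (∀ i j, M i j ∈ A) ∧ vmat M = x} ^ 2 ≤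
      (∑ j ∈ range (e + 1), #A ^ j) * ∑ᶠ (l : F) (_ : l ≠ 0),
        Nat.card {M : Matrix (Fin e) (Fin e) F // (∀ i j, M i j ∈ A) ∧ M.det = l} ^ 2 := by
  classical
  simp only [← mem_matricesIn]
  rw [finsum_card_fiber_sq, finsum_card_fiber_sq, ← sum_range_reflect, Nat.add_sub_cancel, sum_mul,
    sum_range fun j => #A ^ (e - j) * _]
  refine (card_le_card ?_).trans <| card_biUnion_le.trans <|
    sum_le_sum fun i _ => card_pairs_isLeast_support_vmat_le A i
  rintro ⟨M, M'⟩ h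
  simp only [mem_filter, mem_biUnion, mem_univ, true_and] at h ⊢
  obtain ⟨hA, hv, hne⟩ := h
  obtain ⟨i, hi⟩ := exists_minimal_of_wellFoundedLT (· ∈ Function.support (vmat M))
    (Function.ne_iff.mp hne)
  exact ⟨i, hA, hv, minimal_iff_isLeast.mp hi⟩

/-- Statement 6, with `d = e + 1 ≥ 2`. -/
theorem stmt_6 (F : Type) [Field F] [Fintype F] [DecidableEq F]
    (hq : Odd (Fintype.card F)) (e : ℕ) (he : 1 ≤ e) (A : Finset F) :
    ∑ x ∈ Finset.univ.filter (fun x : Fin (e + 1) → F => x ≠ 0), gcount F e A x ^ 2 ≤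
      (∑ j ∈ Finset.range (e + 1), A.card ^ j) *
        ∑ l ∈ Finset.univ.filter (fun l : F => l ≠ 0), matCount F e A l ^ 2 := by
  simpa only [finsum_cond_eq_sum_of_cond_iff _ fun _ => (mem_filter_univ _).symm, gcount, matCount]
    using stmt_6_general e A
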